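/- Suppose Γ is a configuration satisfying the Working Conditions with at least one bad vertex, let φ be an embedding of Γ into ℤ^N, let x be a bad vertex with adjusted weight w'(x) = 0, and suppose the restriction of φ to the vertices of the extended bad part is either standard or semi-standard at some bad vertex different from x. If v is a vertex with v ≠ x and supp(φ(v)) ∩ supp(φ(x)) ≠ ∅, then v is adjacent to x. -/

import Mathlib

namespace LensPaper

/-- A finite weighted simple graph: the combinatorial data underlying a configuration
(a disjoint union of weighted linear graphs).  The fact that every connected component
is a path is recorded separately by `Config.IsLinear`. -/
structure Config where
  V : Type
  fin : Fintype V
  deq : DecidableEq V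
  graph : SimpleGraph V
  adjDec : DecidableRel graph.Adj
  w : V → ℤ

attribute [instance] Config.fin Config.deq Config.adjDec

namespace Config

/-- The degree of a vertex. -/
noncomputable def deg (C : Config) (v : C.V) : ℕ := (C.graph.neighborSet v).ncard

/-- A configuration: every component is a path, i.e. all degrees are at most `2` and the
graph is acyclic. -/
def IsLinear (C : Config) : Prop :=
  (∀ v : C.V, C.deg v ≤ 2) ∧ C.graph.IsAcyclic

/-- The adjusted weight `w'(v) = w(v) - deg(v)`. -/
noncomputable def adjw (C : Config) (v : C.V) : ℤ := C.w v - C.deg v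

/-- A vertex is bad if it is adjacent to two distinct vertices of positive adjusted
weight. -/
def IsBad (C : Config) (x : C.V) : Prop :=
  ∃ u v : C.V, u ≠ v ∧ C.graph.Adj x u ∧ C.graph.Adj x v ∧ 0 < C.adjw u ∧ 0 < C.adjw v

/-- A leaf: a vertex of degree at most one. -/
def IsLeaf (C : Config) (v : C.V) : Prop := C.deg v ≤ 1

/-- `v 0, v 1, …, v m` is a chain of consecutive (distinct) vertices. -/
def IsChain (C : Config) (m : ℕ) (v : ℕ → C.V) : Prop :=
  (∀ i ≤ m, ∀ j ≤ m, v i = v j → i = j) ∧ ∀ i < m, C.graph.Adj (v i) (v (i + 1))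

/-- The chain `v 0, …, v m` has the list `p` as its sequence of adjusted weights. -/
def ChainPattern (C : Config) (m : ℕ) (v : ℕ → C.V) (p : List ℤ) : Prop :=
  C.IsChain m v ∧ m + 1 = p.length ∧ ∀ i : Fin p.length, C.adjw (v i) = p.get i

/-- `Γ` contains a chain of consecutive vertices whose adjusted weights, read in order,
form the list `p`. -/
def HasPattern (C : Config) (p : List ℤ) : Prop := ∃ m v, C.ChainPattern m v p

/-- A chain realizing a bad-part pattern `p` (each entry of `p` is an adjusted weight
together with a flag marking the bad positions): the chain has the prescribed adjusted
weights, and the bad vertices of the configuration are exactly the vertices of the chain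
in the flagged positions. -/
def IsBadPartChain (C : Config) (p : List (ℤ × Bool)) (m : ℕ) (v : ℕ → C.V) : Prop :=
  C.IsChain m v ∧ m + 1 = p.length ∧
  (∀ i : Fin p.length, C.adjw (v i) = (p.get i).1) ∧
  (∀ x : C.V, C.IsBad x ↔ ∃ i : Fin p.length, (p.get i).2 = true ∧ v i = x)

end Config

/-- The chains of adjusted weights forbidden by Working Condition VI. -/
def forbiddenPatterns : List (List ℤ) :=
  [[1, 0, 0, 2], [1, 0, 0, 3], [1, 0, 0, 0, 3], [1, 1, 0, 0, 1, 2], [3, 1, 0, 0, 1],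
   [1, 0, 1, 2], [1, 0, 1, 3], [1, 1, 0, 2], [1, 1, 0, 1, 1, 2]]

/-- The bad-part patterns of Working Condition VII; `true` marks the bad positions. -/
def badPatterns : List (List (ℤ × Bool)) :=
  [[(1, false), (0, true), (1, false)],
   [(1, false), (0, true), (2, false)],
   [(1, false), (0, true), (3, false)],
   [(1, false), (1, true), (1, false)],
   [(1, false), (1, true), (2, false)],
   [(1, false), (2, true), (1, false)],
   [(1, false), (0, true), (1, false), (0, true), (1, false)],
   [(1, false), (0, true), (1, false), (0, true), (2, false)],
   [(1, false), (0, true), (1, false), (1, true), (1, false)],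
   [(1, false), (0, true), (1, false), (1, true), (2, false)],
   [(1, false), (1, true), (1, true), (1, false)],
   [(1, false), (1, true), (1, true), (1, true), (1, false)],
   [(1, false), (1, true), (2, true), (1, false)]]

namespace Config

/-- The Working Conditions (I)–(VII). -/
def WorkingConditions (C : Config) : Prop :=
  (∀ v : C.V, 2 ≤ C.w v) ∧
  (∀ v : C.V, C.adjw v ≤ 3) ∧
  (∀ u v : C.V, 1 < C.adjw u → 1 < C.adjw v → u = v) ∧
  (∀ v x : C.V, 1 < C.adjw v → C.IsBad x → C.adjw x = 1 → C.graph.Adj x v) ∧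
  ((∃ v : C.V, C.adjw v = 3) →
     ∀ u u' : C.V, C.graph.Adj u u' → C.adjw u = 1 → C.adjw u' = 1 → False) ∧
  (∀ u v x : C.V, C.graph.Adj u v → C.adjw u = 1 → C.adjw v = 1 →
     C.IsBad x → C.adjw x = 2 → C.graph.Adj x u ∨ C.graph.Adj x v) ∧
  (∀ p ∈ forbiddenPatterns, ¬ C.HasPattern p) ∧
  ((∃ x : C.V, C.IsBad x) → ∃ p ∈ badPatterns, ∃ m v, C.IsBadPartChain p m v)

end Config

/-- The standard inner product on `ℤ^N`. -/
def dot {N : ℕ} (x y : Fin N → ℤ) : ℤ := ∑ i, x i * y i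

/-- The support of a vector of `ℤ^N` with respect to the standard orthonormal basis. -/
def supp {N : ℕ} (x : Fin N → ℤ) : Finset (Fin N) :=
  Finset.univ.filter fun i => x i ≠ 0

namespace Config

/-- An embedding of a configuration into `ℤ^N`. -/
def IsEmbedding (C : Config) (N : ℕ) (φ : C.V → Fin N → ℤ) : Prop :=
  ∀ u v : C.V, dot (φ u) (φ v) =
    if u = v then C.w u else if C.graph.Adj u v then -1 else 0

/-- The restriction of `φ` to `S` is standard. -/
def IsStandardOn (C : Config) (N : ℕ) (φ : C.V → Fin N → ℤ) (S : Set C.V) : Prop :=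
  ∀ u ∈ S, ∀ v ∈ S,
    ((supp (φ u) ∩ supp (φ v)).card : ℤ) =
      if u = v then C.w v else if C.graph.Adj u v then 1 else 0

/-- A standard embedding. -/
def IsStandard (C : Config) (N : ℕ) (φ : C.V → Fin N → ℤ) : Prop :=
  C.IsStandardOn N φ Set.univ

/-- The restriction of `φ` to `S` is semi-standard at `x`. -/
def IsSemiStandardAtOn (C : Config) (N : ℕ) (φ : C.V → Fin N → ℤ) (x : C.V)
    (S : Set C.V) : Prop :=
  (∀ u ∈ S, ∀ v ∈ S,
    ((supp (φ u) ∩ supp (φ v)).card : ℤ) =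
      if u = v then C.w v
      else if C.graph.Adj u v then 1
      else if C.graph.Adj x u ∧ C.graph.Adj x v then 2
      else 0) ∧
  (∀ u ∈ S, ∀ v ∈ S, u ≠ v → C.graph.Adj x u → C.graph.Adj x v →
    (supp (φ u) ∩ supp (φ x) ∩ supp (φ v)).card = 1)

/-- A semi-standard embedding: semi-standard at some bad vertex. -/
def IsSemiStandard (C : Config) (N : ℕ) (φ : C.V → Fin N → ℤ) : Prop :=
  ∃ x : C.V, C.IsBad x ∧ C.IsSemiStandardAtOn N φ x Set.univ

/-- A candidate for the extended bad part: a chain containing the bad part whose two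
ends are either leaves or preceded by two consecutive vertices of vanishing adjusted
weight. -/
def IsEBPCand (C : Config) (m : ℕ) (v : ℕ → C.V) : Prop :=
  C.IsChain m v ∧
  (∀ p ∈ badPatterns, ∀ mb vb, C.IsBadPartChain p mb vb →
     ∀ i ≤ mb, ∃ j ≤ m, v j = vb i) ∧
  (C.IsLeaf (v 0) ∨ (2 ≤ m ∧ C.adjw (v 1) = 0 ∧ C.adjw (v 2) = 0)) ∧
  (C.IsLeaf (v m) ∨ (2 ≤ m ∧ C.adjw (v (m - 1)) = 0 ∧ C.adjw (v (m - 2)) = 0))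

/-- The extended bad part: a candidate with the fewest vertices. -/
def IsExtBadPart (C : Config) (m : ℕ) (v : ℕ → C.V) : Prop :=
  C.IsEBPCand m v ∧ ∀ m' v', C.IsEBPCand m' v' → m ≤ m'

/-- The set of vertices of the chain `v 0, …, v m`. -/
def ebpSet (C : Config) (m : ℕ) (v : ℕ → C.V) : Set C.V := {y | ∃ i ≤ m, v i = y}

/-- The outside part of `Γ` relative to the extended bad part `v 0, …, v m`. -/
def OutsidePart (C : Config) (m : ℕ) (v : ℕ → C.V) : Set C.V :=
  {x | ∀ i ≤ m, v i ≠ x}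
  ∪ {x | ¬ C.IsLeaf (v 0) ∧ (x = v 0 ∨ x = v 1 ∨ x = v 2)}
  ∪ {x | ¬ C.IsLeaf (v m) ∧ (x = v m ∨ x = v (m - 1) ∨ x = v (m - 2))}

/-- A screw at the front end of the extended bad part. -/
def IsFrontScrew (C : Config) (N : ℕ) (φ : C.V → Fin N → ℤ) (m : ℕ) (v : ℕ → C.V)
    (e : Fin N) : Prop :=
  ¬ C.IsLeaf (v 0) ∧ 3 ≤ m ∧ φ (v 2) e ≠ 0 ∧ φ (v 3) e ≠ 0

/-- A screw at the back end of the extended bad part. -/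
def IsBackScrew (C : Config) (N : ℕ) (φ : C.V → Fin N → ℤ) (m : ℕ) (v : ℕ → C.V)
    (e : Fin N) : Prop :=
  ¬ C.IsLeaf (v m) ∧ 3 ≤ m ∧ φ (v (m - 2)) e ≠ 0 ∧ φ (v (m - 3)) e ≠ 0

/-- All screws of `Γ` (with respect to `φ`) are clean. -/
def AllScrewsClean (C : Config) (N : ℕ) (φ : C.V → Fin N → ℤ) (m : ℕ)
    (v : ℕ → C.V) : Prop :=
  (∀ e : Fin N, C.IsFrontScrew N φ m v e →
    ∀ u : C.V, u ≠ v 2 → u ≠ v 3 → φ u e = 0) ∧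
  (∀ e : Fin N, C.IsBackScrew N φ m v e →
    ∀ u : C.V, u ≠ v (m - 2) → u ≠ v (m - 3) → φ u e = 0)

end Config

/-!
Suppose the support of `z` meets that of `x` although `z ≠ x` is not adjacent to `x`. Standardness
puts `z` far from all bad vertices, and since orthogonal vectors cannot share exactly one
coordinate, the support of `z` contains the two coordinates of `x` and meets the (disjoint) supports
of both neighbours of `x` in at least two coordinates. So the support has at least four elements,
which forces `w'(z) ≥ 2`; then `z` is the only vertex with `w' > 1`, and all entries of all vectors
are `0` or `±1`. From here on signs can be forgotten: two supports meet in an odd number of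
coordinates exactly when the vertices are adjacent. Comparing the supports of the vertices near `x`
with those near `z`, and using that the chain `(3,1,0,0,1)` is forbidden, one finds that `z` has two
neighbours of positive adjusted weight, so `z` is itself bad, although it is far from bad vertices.
-/

/-! ### Vectors and supports -/

theorem mem_supp {N : ℕ} {a : Fin N → ℤ} {i : Fin N} : i ∈ supp a ↔ a i ≠ 0 := by
  simp [supp]

section Vectors

variable {N : ℕ} {a b : Fin N → ℤ}

theorem dot_eq_sum_supp_inter (a b : Fin N → ℤ) :
    dot a b = ∑ i ∈ supp a ∩ supp b, a i * b i := by
  refine (Finset.sum_subset (Finset.subset_univ _) fun i _ hi => ?_).symm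
  rw [Finset.mem_inter, mem_supp, mem_supp] at hi
  grind

theorem supp_inter_nonempty_of_dot_ne_zero (h : dot a b ≠ 0) :
    (supp a ∩ supp b).Nonempty := by
  rw [dot_eq_sum_supp_inter] at h
  exact Finset.nonempty_of_sum_ne_zero h

theorem card_supp_inter_ne_one_of_dot_eq_zero (h : dot a b = 0) :
    (supp a ∩ supp b).card ≠ 1 := by
  intro hcard
  obtain ⟨i, hi⟩ := Finset.card_eq_one.1 hcard
  have hmem : i ∈ supp a ∩ supp b := hi ▸ Finset.mem_singleton_self i
  rw [Finset.mem_inter, mem_supp, mem_supp] at hmem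
  rw [dot_eq_sum_supp_inter, hi, Finset.sum_singleton] at h
  exact mul_ne_zero hmem.1 hmem.2 h

theorem card_supp_add_sq_sub_one_le_dot_self {i : Fin N} (hi : i ∈ supp a) :
    (supp a).card + (a i ^ 2 - 1) ≤ dot a a := by
  have hnonneg : ∀ j ∈ supp a, 0 ≤ a j ^ 2 - 1 := fun j hj => by
    have := pow_pos (abs_pos.2 (mem_supp.1 hj)) 2
    rw [sq_abs] at this
    lia
  calc (supp a).card + (a i ^ 2 - 1)
      ≤ (supp a).card + ∑ j ∈ supp a, (a j ^ 2 - 1) := by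
        gcongr
        exact Finset.single_le_sum hnonneg hi
    _ = dot a a := by
        rw [dot_eq_sum_supp_inter, Finset.inter_self, Finset.sum_sub_distrib]
        simp [sq]

theorem abs_le_one_of_dot_self_lt (h : dot a a < (supp a).card + 3) (i : Fin N) :
    |a i| ≤ 1 := by
  by_cases hi : i ∈ supp a
  · have := card_supp_add_sq_sub_one_le_dot_self hi
    by_contra! hlarge
    nlinarith [sq_abs (a i)]
  · simp [not_not.1 (mem_supp.not.1 hi)]

theorem card_supp_eq_dot_self (ha : ∀ i, |a i| ≤ 1) : ((supp a).card : ℤ) = dot a a := by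
  have hone : ∀ i ∈ supp a, a i * a i = 1 := fun i hi => by
    have := abs_le.1 (ha i)
    have := mem_supp.1 hi
    rcases (by lia : a i = 1 ∨ a i = -1) with h | h <;> simp [h]
  rw [dot_eq_sum_supp_inter, Finset.inter_self, Finset.sum_congr rfl hone]
  simp

theorem odd_card_supp_inter_iff (ha : ∀ i, |a i| ≤ 1) (hb : ∀ i, |b i| ≤ 1) :
    Odd (supp a ∩ supp b).card ↔ Odd (dot a b) := by
  have heven : Even (dot a b - (supp a ∩ supp b).card) := by
    rw [dot_eq_sum_supp_inter, Finset.cast_card, ← Finset.sum_sub_distrib]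
    refine Finset.even_sum _ fun i hi => ?_
    rw [Finset.mem_inter, mem_supp, mem_supp] at hi
    have := abs_le.1 (ha i)
    have := abs_le.1 (hb i)
    rcases (by lia : a i = 1 ∨ a i = -1) with h | h <;>
      rcases (by lia : b i = 1 ∨ b i = -1) with h' | h' <;> simp [h, h']
  rw [Int.even_sub'] at heven
  rw [heven, Int.odd_coe_nat]

end Vectors

theorem subset_and_four_le_card {ι : Type*} [DecidableEq ι] {X U V Z : Finset ι}
    (hX : X.card = 2) (hXU : (X ∩ U).Nonempty) (hXV : (X ∩ V).Nonempty)
    (hUV : Disjoint U V) (hZX : (Z ∩ X).Nonempty) (hZX₁ : (Z ∩ X).card ≠ 1)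
    (hZU₁ : (Z ∩ U).card ≠ 1) (hZV₁ : (Z ∩ V).card ≠ 1) :
    X ⊆ Z ∧ 4 ≤ Z.card := by
  have two_le : ∀ {s : Finset ι}, s.Nonempty → s.card ≠ 1 → 2 ≤ s.card := fun hs h => by
    have := hs.card_pos
    lia
  have hXZ : X ⊆ Z :=
    Finset.inter_eq_right.1 (Finset.eq_of_subset_of_card_le Finset.inter_subset_right
      (hX ▸ two_le hZX hZX₁))
  refine ⟨hXZ, ?_⟩
  have hZU := two_le (hXU.mono (Finset.inter_subset_inter_right hXZ)) hZU₁
  have hZV := two_le (hXV.mono (Finset.inter_subset_inter_right hXZ)) hZV₁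
  calc 4 ≤ (Z ∩ U).card + (Z ∩ V).card := by lia
    _ = (Z ∩ U ∪ Z ∩ V).card := (Finset.card_union_of_disjoint
        (hUV.mono Finset.inter_subset_right Finset.inter_subset_right)).symm
    _ ≤ Z.card := Finset.card_le_card
        (Finset.union_subset Finset.inter_subset_left Finset.inter_subset_left)

/-! ### Paths and the extended bad part -/

theorem isPath_cons_cons {V : Type*} {G : SimpleGraph V} (hG : G.IsAcyclic) {a b c d : V}
    {hab : G.Adj a b} {hbc : G.Adj b c} {W : G.Walk c d} (hac : a ≠ c)
    (hW : (SimpleGraph.Walk.cons hbc W).IsPath) :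
    (SimpleGraph.Walk.cons hab (.cons hbc W)).IsPath := by
  rw [hG.isPath_iff_isChain] at hW ⊢
  simp only [SimpleGraph.Walk.edges_cons] at hW ⊢
  refine List.isChain_cons_cons.2 ⟨fun hedge => ?_, hW⟩
  rw [Sym2.eq_swap, Sym2.congr_right] at hedge
  exact hac hedge

theorem ne_and_not_adj_of_isPath {V : Type*} {G : SimpleGraph V} (hG : G.IsAcyclic) {a b : V}
    {W : G.Walk a b} (hW : W.IsPath) (hlen : 2 ≤ W.length) : a ≠ b ∧ ¬ G.Adj a b := by
  refine ⟨?_, fun hab => ?_⟩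
  · rintro rfl
    have := (SimpleGraph.Walk.isPath_iff_nil.1 hW).length_eq_zero
    lia
  · have := congrArg (fun P : G.Path a b => P.1.length)
      ((hG.subsingleton_path a b).elim ⟨W, hW⟩ (SimpleGraph.Path.singleton hab))
    simp_all

namespace Config

variable {C : Config}

theorem two_le_deg {v a b : C.V} (hab : a ≠ b) (ha : C.graph.Adj v a)
    (hb : C.graph.Adj v b) : 2 ≤ C.deg v :=
  (Set.one_lt_ncard (Set.toFinite _)).2 ⟨a, ha, b, hb, hab⟩

theorem exists_adj_of_deg_pos {v : C.V} (h : 0 < C.deg v) : ∃ a, C.graph.Adj v a :=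
  Set.nonempty_of_ncard_ne_zero h.ne'

theorem exists_adj_ne_of_two_le_deg {v : C.V} (h : 2 ≤ C.deg v) (a : C.V) :
    ∃ b, b ≠ a ∧ C.graph.Adj v b := by
  obtain ⟨b, hb, hba⟩ := Set.exists_ne_of_one_lt_ncard h a
  exact ⟨b, hba, hb⟩

theorem IsLeaf.eq_of_adj {v a b : C.V} (h : C.IsLeaf v) (ha : C.graph.Adj v a)
    (hb : C.graph.Adj v b) : b = a := by
  by_contra hba
  exact absurd (two_le_deg hba hb ha) (not_le.2 (Nat.lt_succ_of_le h))

theorem IsLinear.eq_or_eq_of_adj (hlin : C.IsLinear) {v a b c : C.V} (hab : a ≠ b)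
    (ha : C.graph.Adj v a) (hb : C.graph.Adj v b) (hc : C.graph.Adj v c) :
    c = a ∨ c = b := by
  by_contra! hne
  have : 2 < C.deg v :=
    (Set.two_lt_ncard (Set.toFinite _)).2 ⟨c, hc, a, ha, b, hb, hne.1, hne.2, hab⟩
  exact absurd (hlin.1 v) (not_le.2 this)

theorem IsBad.two_le_deg {x : C.V} (hx : C.IsBad x) : 2 ≤ C.deg x := by
  obtain ⟨_, _, huv, hu, hv, -⟩ := hx
  exact Config.two_le_deg huv hu hv

theorem IsBad.adjw_pos (hlin : C.IsLinear) {x u : C.V} (hx : C.IsBad x)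
    (hu : C.graph.Adj x u) : 0 < C.adjw u := by
  obtain ⟨a, b, hab, ha, hb, ha_pos, hb_pos⟩ := hx
  rcases hlin.eq_or_eq_of_adj hab ha hb hu with rfl | rfl <;> assumption

theorem hasPattern_of_isPath {a b : C.V} {W : C.graph.Walk a b} (hW : W.IsPath) :
    C.HasPattern (W.support.map C.adjw) :=
  ⟨W.length, W.getVert, ⟨fun _ hi _ hj h => hW.getVert_injOn hi hj h,
    fun _ hi => W.adj_getVert_succ hi⟩, by simp,
    fun i => by simp [W.support_getElem_eq_getVert]⟩

theorem adjw_nonneg (hlin : C.IsLinear) {v : C.V} (hw : 2 ≤ C.w v) : 0 ≤ C.adjw v := by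
  have := hlin.1 v
  rw [adjw]
  lia

theorem deg_eq_two (hlin : C.IsLinear) {v : C.V} (hw : 2 ≤ C.w v) (hv : C.adjw v = 0) :
    C.deg v = 2 := by
  have := hlin.1 v
  rw [adjw] at hv
  lia

namespace WorkingConditions

theorem two_le_w (hwc : C.WorkingConditions) (v : C.V) : 2 ≤ C.w v := hwc.1 v

theorem adjw_le_three (hwc : C.WorkingConditions) (v : C.V) : C.adjw v ≤ 3 := hwc.2.1 v

theorem adjw_le_one (hwc : C.WorkingConditions) {z v : C.V} (hz : 1 < C.adjw z)
    (hv : v ≠ z) : C.adjw v ≤ 1 :=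
  not_lt.1 fun h => hv (hwc.2.2.1 v z h hz)

theorem adjw_eq_zero_of_adj (hwc : C.WorkingConditions) (hlin : C.IsLinear) {z u v : C.V}
    (hz : C.adjw z = 3) (huv : C.graph.Adj u v) (hu : C.adjw u = 1) (hv : v ≠ z) :
    C.adjw v = 0 := by
  have := adjw_nonneg hlin (hwc.two_le_w v)
  have := hwc.adjw_le_one (by lia) hv
  have := hwc.2.2.2.2.1 ⟨z, hz⟩ u v huv hu
  lia

theorem not_hasPattern (hwc : C.WorkingConditions) {p : List ℤ} (hp : p ∈ forbiddenPatterns) :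
    ¬ C.HasPattern p :=
  hwc.2.2.2.2.2.2.1 p hp

theorem exists_isBadPartChain (hwc : C.WorkingConditions) {x : C.V} (hx : C.IsBad x) :
    ∃ p ∈ badPatterns, ∃ m v, C.IsBadPartChain p m v :=
  hwc.2.2.2.2.2.2.2 ⟨x, hx⟩

end WorkingConditions

theorem IsChain.exists_eq_of_adj (hlin : C.IsLinear) {m : ℕ} {vc : ℕ → C.V}
    (hvc : C.IsChain m vc) (hm : 0 < m) {j : ℕ} (hj : j ≤ m)
    (hfront : C.IsLeaf (vc 0) ∨ 1 ≤ j) (hback : C.IsLeaf (vc m) ∨ j + 1 ≤ m) {b : C.V}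
    (hb : C.graph.Adj (vc j) b) : ∃ i ≤ m, vc i = b ∧ i ≤ j + 1 ∧ j ≤ i + 1 := by
  rcases Nat.eq_zero_or_pos j with rfl | hj0
  · have hleaf := hfront.resolve_right (by lia)
    exact ⟨1, hm, (hleaf.eq_of_adj (hvc.2 0 hm) hb).symm, by lia, by lia⟩
  obtain ⟨k, rfl⟩ : ∃ k, j = k + 1 := ⟨j - 1, by lia⟩
  have hprev : C.graph.Adj (vc (k + 1)) (vc k) := (hvc.2 k (by lia)).symm
  rcases hj.eq_or_lt with rfl | hjm
  · have hleaf := hback.resolve_right (by lia)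
    exact ⟨k, by lia, (hleaf.eq_of_adj hprev hb).symm, by lia, by lia⟩
  · have hne : vc k ≠ vc (k + 2) := fun h => by
      have := hvc.1 _ (by lia) _ (by lia) h
      lia
    rcases hlin.eq_or_eq_of_adj hne hprev (hvc.2 (k + 1) hjm) hb with rfl | rfl
    · exact ⟨k, by lia, rfl, by lia, by lia⟩
    · exact ⟨k + 2, by lia, rfl, by lia, by lia⟩

theorem IsChain.mem_ebpSet_of_walk (hlin : C.IsLinear) {m : ℕ} {vc : ℕ → C.V}
    (hvc : C.IsChain m vc) (hm : 0 < m) {a b : C.V} (W : C.graph.Walk a b) :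
    ∀ {j : ℕ}, j ≤ m → vc j = a → (C.IsLeaf (vc 0) ∨ W.length ≤ j) →
      (C.IsLeaf (vc m) ∨ j + W.length ≤ m) → b ∈ C.ebpSet m vc := by
  induction W with
  | nil => exact fun hj hja _ _ => ⟨_, hj, hja⟩
  | cons hab W ih =>
    rintro j hj rfl hfront hback
    rw [SimpleGraph.Walk.length_cons] at hfront hback
    obtain ⟨i, hi, hib, hij, hji⟩ := hvc.exists_eq_of_adj hlin hm hj
      (hfront.imp_right (by lia)) (hback.imp_right (by lia)) hab
    exact ih hi hib (hfront.imp_right (by lia)) (hback.imp_right (by lia))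

theorem IsEBPCand.exists_eq_of_isBad (hwc : C.WorkingConditions) {m : ℕ} {vc : ℕ → C.V}
    (hcand : C.IsEBPCand m vc) {y : C.V} (hy : C.IsBad y) : ∃ i ≤ m, vc i = y := by
  obtain ⟨p, hp, mb, vb, hvb⟩ := hwc.exists_isBadPartChain hy
  obtain ⟨k, -, rfl⟩ := (hvb.2.2.2 y).1 hy
  exact hcand.2.1 p hp mb vb hvb k (by have := hvb.2.1; lia)

theorem IsEBPCand.mem_ebpSet_of_walk (hlin : C.IsLinear) (hwc : C.WorkingConditions) {m : ℕ}
    {vc : ℕ → C.V} (hcand : C.IsEBPCand m vc) {y b : C.V} (hy : C.IsBad y)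
    (W : C.graph.Walk y b) (hW : W.length ≤ 4) : b ∈ C.ebpSet m vc := by
  obtain ⟨i, him, rfl⟩ := hcand.exists_eq_of_isBad hwc hy
  obtain ⟨hvc, -, hfront, hback⟩ := hcand
  have hm : 0 < m := by
    by_contra! hm0
    have hleaf : C.deg (vc 0) ≤ 1 := hfront.resolve_right (by lia)
    obtain rfl : i = 0 := by lia
    exact absurd hy.two_le_deg (by lia)
  have not_next_to_zero : ∀ k ≤ m, C.adjw (vc k) = 0 → i + 1 ≠ k ∧ k + 1 ≠ i := by
    refine fun k hk hzero => ⟨?_, ?_⟩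
    · rintro rfl
      exact (hy.adjw_pos hlin (hvc.2 i (by lia))).ne' hzero
    · rintro rfl
      exact (hy.adjw_pos hlin (hvc.2 k (by lia)).symm).ne' hzero
  refine hvc.mem_ebpSet_of_walk hlin hm W him rfl ?_ ?_
  · refine hfront.imp_right fun ⟨_, hone, htwo⟩ => ?_
    have := not_next_to_zero 1 (by lia) hone
    have := not_next_to_zero 2 (by lia) htwo
    lia
  · refine hback.imp_right fun ⟨_, hone, htwo⟩ => ?_
    have := not_next_to_zero (m - 1) (by lia) hone
    have := not_next_to_zero (m - 2) (by lia) htwo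
    lia

end Config

/-! ### Parity embeddings -/

section Parity

variable {ι : Type*} [DecidableEq ι] {S T : Finset ι}

theorem two_le_card_inter_of_even (heven : Even (S ∩ T).card) (hST : ¬ Disjoint S T) :
    2 ≤ (S ∩ T).card := by
  obtain ⟨k, hk⟩ := heven
  have := (Finset.not_disjoint_iff_nonempty_inter.1 hST).card_pos
  lia

theorem card_inter_eq_one_of_odd (hodd : Odd (S ∩ T).card) (hle : (S ∩ T).card ≤ 2) :
    (S ∩ T).card = 1 := by
  obtain ⟨k, hk⟩ := hodd
  lia

theorem not_disjoint_of_odd_card_inter (hodd : Odd (S ∩ T).card) : ¬ Disjoint S T :=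
  Finset.not_disjoint_iff_nonempty_inter.2 (Finset.card_pos.1 hodd.pos)

theorem subset_of_even_card_inter (hS : S.card = 2) (heven : Even (S ∩ T).card)
    (hST : ¬ Disjoint S T) : S ⊆ T :=
  Finset.inter_eq_left.1 (Finset.eq_of_subset_of_card_le Finset.inter_subset_left
    (hS.trans_le (two_le_card_inter_of_even heven hST)))

end Parity

namespace Config

variable {C : Config}

/-- A vertex is remote if it is at distance at least `5` from every bad vertex (or in another
component); vertices outside the extended bad part are remote. -/
def IsRemote (C : Config) (z : C.V) : Prop :=
  ∀ y, C.IsBad y → ∀ W : C.graph.Walk y z, 5 ≤ W.length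

/-- The combinatorial shadow of an embedding all of whose vectors have entries in `{-1, 0, 1}`:
`A v` is the support of the image of `v`, and inner products are only remembered modulo `2`. -/
structure IsParityEmbedding (C : Config) {ι : Type*} [DecidableEq ι] (A : C.V → Finset ι) :
    Prop where
  card_eq_w : ∀ v, ((A v).card : ℤ) = C.w v
  odd_card_inter_iff : ∀ u v, u ≠ v → (Odd (A u ∩ A v).card ↔ C.graph.Adj u v)

/-- The situation to be excluded: the support of a remote vertex `z` of adjusted weight at least
`2`, the only vertex of such adjusted weight, meets the support of a bad vertex `x` of adjusted
weight `0`, near which the supports are as in a standard embedding. -/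
structure IsIntruder (C : Config) {ι : Type*} [DecidableEq ι] (A : C.V → Finset ι) (x z : C.V) :
    Prop where
  isLinear : C.IsLinear
  two_le_w : ∀ v, 2 ≤ C.w v
  isParityEmbedding : C.IsParityEmbedding A
  isBad : C.IsBad x
  adjw_eq_zero : C.adjw x = 0
  isRemote : C.IsRemote z
  one_lt_adjw : 1 < C.adjw z
  adjw_le_one : ∀ {v}, v ≠ z → C.adjw v ≤ 1
  meets : ¬ Disjoint (A z) (A x)
  disjoint_of_adj : ∀ {u v}, C.graph.Adj x u → C.graph.Adj x v → u ≠ v → Disjoint (A u) (A v)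
  disjoint_of_adj_adj : ∀ {u t}, C.graph.Adj x u → C.graph.Adj u t → t ≠ x → Disjoint (A t) (A x)

theorem IsRemote.not_isBad_of_walk {z p : C.V} (hz : C.IsRemote z) (W : C.graph.Walk p z)
    (hW : W.length ≤ 4) : ¬ C.IsBad p :=
  fun hp => by
    have := hz p hp W
    lia

theorem IsRemote.ne_and_not_adj {x z a p : C.V} (hz : C.IsRemote z) (hx : C.IsBad x)
    (W₁ : C.graph.Walk x a) (W₂ : C.graph.Walk p z) (hW : W₁.length + W₂.length ≤ 3) :
    a ≠ p ∧ ¬ C.graph.Adj a p := by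
  refine ⟨?_, fun hap => ?_⟩
  · rintro rfl
    have := hz x hx (W₁.append W₂)
    rw [SimpleGraph.Walk.length_append] at this
    lia
  · have := hz x hx (W₁.append (.cons hap W₂))
    rw [SimpleGraph.Walk.length_append, SimpleGraph.Walk.length_cons] at this
    lia

namespace IsParityEmbedding

variable {ι : Type*} [DecidableEq ι] {A : C.V → Finset ι}

theorem odd_card_inter (hA : C.IsParityEmbedding A) {u v : C.V} (huv : C.graph.Adj u v) :
    Odd (A u ∩ A v).card :=
  (hA.odd_card_inter_iff u v huv.ne).2 huv

theorem even_card_inter (hA : C.IsParityEmbedding A) {u v : C.V}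
    (huv : u ≠ v ∧ ¬ C.graph.Adj u v) : Even (A u ∩ A v).card :=
  Nat.not_odd_iff_even.1 fun h => huv.2 ((hA.odd_card_inter_iff u v huv.1).1 h)

theorem card_eq_adjw_add_deg (hA : C.IsParityEmbedding A) (v : C.V) :
    ((A v).card : ℤ) = C.adjw v + C.deg v := by
  rw [hA.card_eq_w, adjw, sub_add_cancel]

theorem card_eq_two (hA : C.IsParityEmbedding A) (hlin : C.IsLinear) {v : C.V}
    (hw : 2 ≤ C.w v) (hv : C.adjw v = 0) : (A v).card = 2 := by
  have := hA.card_eq_adjw_add_deg v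
  have := deg_eq_two hlin hw hv
  lia

end IsParityEmbedding
end Config

/-! ### Intruders do not exist -/

namespace Config
namespace IsIntruder

variable {C : Config} {ι : Type*} [DecidableEq ι] {A : C.V → Finset ι} {x z u v t p q : C.V}

theorem ne_and_not_adj (h : C.IsIntruder A x z) (W₁ : C.graph.Walk x u)
    (W₂ : C.graph.Walk p z) (hW : W₁.length + W₂.length ≤ 3) : u ≠ p ∧ ¬ C.graph.Adj u p :=
  h.isRemote.ne_and_not_adj h.isBad W₁ W₂ hW

theorem even_card_inter (h : C.IsIntruder A x z) (W₁ : C.graph.Walk x u)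
    (W₂ : C.graph.Walk p z) (hW : W₁.length + W₂.length ≤ 3) : Even (A p ∩ A u).card := by
  rw [Finset.inter_comm]
  exact h.isParityEmbedding.even_card_inter (h.ne_and_not_adj W₁ W₂ hW)

theorem card_bad (h : C.IsIntruder A x z) : (A x).card = 2 :=
  h.isParityEmbedding.card_eq_two h.isLinear (h.two_le_w x) h.adjw_eq_zero

theorem card_le_three (h : C.IsIntruder A x z) (hp : p ≠ z) : (A p).card ≤ 3 := by
  have := h.isParityEmbedding.card_eq_adjw_add_deg p
  have := h.adjw_le_one hp
  have := h.isLinear.1 p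
  lia

theorem adjw_eq_one_and_deg_eq_two (h : C.IsIntruder A x z) (hp : p ≠ z)
    (hcard : (A p).card = 3) : C.adjw p = 1 ∧ C.deg p = 2 := by
  have := h.isParityEmbedding.card_eq_adjw_add_deg p
  have := h.adjw_le_one hp
  have := h.isLinear.1 p
  lia

theorem ne_of_adj (h : C.IsIntruder A x z) (hu : C.graph.Adj x u) : u ≠ z :=
  (h.ne_and_not_adj hu.toWalk .nil (by simp)).1

theorem card_bad_inter (h : C.IsIntruder A x z) (hu : C.graph.Adj x u) :
    (A x ∩ A u).card = 1 :=
  card_inter_eq_one_of_odd (h.isParityEmbedding.odd_card_inter hu)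
    (h.card_bad ▸ Finset.card_le_card Finset.inter_subset_left)

theorem card_sdiff_bad (h : C.IsIntruder A x z) (hu : C.graph.Adj x u) :
    (A u \ A x).card + 1 = (A u).card := by
  rw [← h.card_bad_inter hu, Finset.inter_comm, Finset.card_sdiff_add_card_inter]

theorem bad_subset_and_four_le_card (h : C.IsIntruder A x z) (W : C.graph.Walk p z)
    (hW : W.length ≤ 2) (hpx : ¬ Disjoint (A p) (A x)) : A x ⊆ A p ∧ 4 ≤ (A p).card := by
  obtain ⟨u, v, huv, hu, hv, -⟩ := h.isBad
  have nonempty : ∀ {a}, C.graph.Adj x a → (A x ∩ A a).Nonempty := fun ha =>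
    Finset.card_pos.1 (by simp [h.card_bad_inter ha])
  have ne_one : ∀ {a} (W' : C.graph.Walk x a), W'.length ≤ 1 → (A p ∩ A a).card ≠ 1 :=
    fun W' hW' hone => by simpa [hone] using h.even_card_inter W' W (by lia)
  exact subset_and_four_le_card h.card_bad (nonempty hu) (nonempty hv)
    (h.disjoint_of_adj hu hv huv) (Finset.not_disjoint_iff_nonempty_inter.1 hpx)
    (ne_one .nil (by simp)) (ne_one hu.toWalk (by simp)) (ne_one hv.toWalk (by simp))

theorem bad_subset (h : C.IsIntruder A x z) : A x ⊆ A z :=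
  (h.bad_subset_and_four_le_card .nil (by simp) h.meets).1

theorem disjoint_bad (h : C.IsIntruder A x z) (W : C.graph.Walk p z) (hW : W.length ≤ 2)
    (hp : p ≠ z) : Disjoint (A p) (A x) := by
  by_contra hpx
  have := (h.bad_subset_and_four_le_card W hW hpx).2
  have := h.card_le_three hp
  lia

theorem card_inter (h : C.IsIntruder A x z) (hu : C.graph.Adj x u) :
    (A z ∩ A u).card = 2 := by
  obtain ⟨k, hk⟩ := h.even_card_inter hu.toWalk .nil (by simp)
  have hpos : (A x ∩ A u).card ≤ (A z ∩ A u).card :=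
    Finset.card_le_card (Finset.inter_subset_inter_right h.bad_subset)
  have hle : (A z ∩ A u).card ≤ (A u).card := Finset.card_le_card Finset.inter_subset_right
  have := h.card_bad_inter hu
  have := h.card_le_three (h.ne_of_adj hu)
  lia

theorem card_inter_sdiff_bad (h : C.IsIntruder A x z) (hu : C.graph.Adj x u) :
    (A z ∩ (A u \ A x)).card = 1 := by
  have hXU : (A z ∩ A u) ∩ A x = A x ∩ A u := by
    rw [Finset.inter_right_comm, Finset.inter_eq_right.2 h.bad_subset]
  have := Finset.card_sdiff_add_card_inter (A z ∩ A u) (A x)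
  rw [hXU, h.card_bad_inter hu, h.card_inter hu] at this
  rw [← Finset.inter_sdiff_assoc]
  lia

theorem card_sdiff_union (h : C.IsIntruder A x z) (hu : C.graph.Adj x u)
    (hv : C.graph.Adj x v) (huv : u ≠ v) : (A z \ (A u ∪ A v)).card + 4 = (A z).card := by
  have hfour : (A z ∩ (A u ∪ A v)).card = 4 := by
    rw [Finset.inter_union_distrib_left, Finset.card_union_of_disjoint
      ((h.disjoint_of_adj hu hv huv).mono Finset.inter_subset_right Finset.inter_subset_right),
      h.card_inter hu, h.card_inter hv]
  rw [← hfour, Finset.card_sdiff_add_card_inter]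

theorem inter_eq_sdiff_bad (h : C.IsIntruder A x z) (W : C.graph.Walk p z) (hW : W.length ≤ 2)
    (hp : p ≠ z) (hu : C.graph.Adj x u) (hpu : ¬ Disjoint (A p) (A u)) :
    A p ∩ A u = A u \ A x ∧ (A u).card = 3 := by
  have htwo := two_le_card_inter_of_even
    (h.even_card_inter hu.toWalk W (by simp; lia)) hpu
  have hsub : A p ∩ A u ⊆ A u \ A x := Finset.subset_sdiff.2
    ⟨Finset.inter_subset_right, (h.disjoint_bad W hW hp).mono_left Finset.inter_subset_left⟩
  have := h.card_sdiff_bad hu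
  have := h.card_le_three (h.ne_of_adj hu)
  have := Finset.card_le_card hsub
  exact ⟨Finset.eq_of_subset_of_card_le hsub (by lia), by lia⟩

theorem inter_subset_sdiff_bad (h : C.IsIntruder A x z) (hu : C.graph.Adj x u)
    (hut : C.graph.Adj u t) (htx : t ≠ x) :
    A t ∩ A u ⊆ A u \ A x ∧ (A t ∩ A u).card = 1 := by
  have hsub : A t ∩ A u ⊆ A u \ A x := Finset.subset_sdiff.2 ⟨Finset.inter_subset_right,
    (h.disjoint_of_adj_adj hu hut htx).mono_left Finset.inter_subset_left⟩
  refine ⟨hsub, card_inter_eq_one_of_odd (h.isParityEmbedding.odd_card_inter hut.symm) ?_⟩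
  have := h.card_sdiff_bad hu
  have := h.card_le_three (h.ne_of_adj hu)
  have := Finset.card_le_card hsub
  lia

theorem disjoint_of_adjw_eq_zero (h : C.IsIntruder A x z) (hzp : C.graph.Adj z p)
    (hpq : C.graph.Adj p q) (hqz : q ≠ z) (hq : C.adjw q = 0) (hu : C.graph.Adj x u) :
    Disjoint (A q) (A u) := by
  by_contra hqu
  have hQ := h.isParityEmbedding.card_eq_two h.isLinear (h.two_le_w q) hq
  obtain ⟨hinter, -⟩ := h.inter_eq_sdiff_bad (.cons hpq.symm hzp.symm.toWalk) (by simp) hqz hu hqu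
  have hQU : A q = A u \ A x := by
    rw [← hinter, eq_comm, Finset.inter_eq_left]
    exact subset_of_even_card_inter hQ
      (h.even_card_inter hu.toWalk (.cons hpq.symm hzp.symm.toWalk) (by simp)) hqu
  have heven : Even (A z ∩ A q).card := h.isParityEmbedding.even_card_inter
    (ne_and_not_adj_of_isPath h.isLinear.2 (W := .cons hzp hpq.toWalk)
      (isPath_cons_cons h.isLinear.2 hqz.symm (.of_adj hpq)) (by simp))
  simp [hQU, h.card_inter_sdiff_bad hu] at heven

theorem card_inter_of_not_disjoint (h : C.IsIntruder A x z) (hzp : C.graph.Adj z p)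
    (hu : C.graph.Adj x u) (hpu : ¬ Disjoint (A p) (A u)) : (A p ∩ A u).card = 2 := by
  obtain ⟨hinter, hU⟩ := h.inter_eq_sdiff_bad hzp.symm.toWalk (by simp) hzp.ne' hu hpu
  have := h.card_sdiff_bad hu
  rw [hinter]
  lia

theorem card_eq_three_and_sdiff_subset (h : C.IsIntruder A x z) (hzp : C.graph.Adj z p)
    (hu : C.graph.Adj x u) (hpu : ¬ Disjoint (A p) (A u)) (hut : C.graph.Adj u t) (htx : t ≠ x) :
    (A p).card = 3 ∧ A p \ A u ⊆ A t := by
  obtain ⟨hinter, -⟩ := h.inter_eq_sdiff_bad hzp.symm.toWalk (by simp) hzp.ne' hu hpu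
  obtain ⟨hsub, hone⟩ := h.inter_subset_sdiff_bad hu hut htx
  rw [← hinter] at hsub
  have hPT : 2 ≤ (A p ∩ A t).card := by
    refine two_le_card_inter_of_even
      (h.even_card_inter (.cons hu hut.toWalk) hzp.symm.toWalk (by simp)) fun hdisj => ?_
    have : A t ∩ A u ⊆ A p ∩ A t := fun i hi =>
      Finset.mem_inter.2 ⟨Finset.mem_of_mem_inter_left (hsub hi), Finset.mem_of_mem_inter_left hi⟩
    rw [Finset.disjoint_iff_inter_eq_empty.1 hdisj, Finset.subset_empty] at this
    simp [this] at hone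
  have hPTU : (A p ∩ A t ∩ A u).card ≤ 1 :=
    hone ▸ Finset.card_le_card (Finset.inter_subset_inter_right Finset.inter_subset_right)
  have hsdiff : (A p ∩ A t) \ A u ⊆ A p \ A u :=
    Finset.sdiff_subset_sdiff Finset.inter_subset_left le_rfl
  have := h.card_inter_of_not_disjoint hzp hu hpu
  have := Finset.card_sdiff_add_card_inter (A p) (A u)
  have := Finset.card_sdiff_add_card_inter (A p ∩ A t) (A u)
  have := h.card_le_three hzp.ne'
  have := Finset.card_le_card hsdiff
  refine ⟨by lia, ?_⟩
  rw [← Finset.eq_of_subset_of_card_le hsdiff (by lia)]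
  exact Finset.sdiff_subset.trans Finset.inter_subset_right

theorem exists_adj_of_not_disjoint (h : C.IsIntruder A x z) (hzp : C.graph.Adj z p)
    (hu : C.graph.Adj x u) (hpu : ¬ Disjoint (A p) (A u)) : ∃ t, t ≠ x ∧ C.graph.Adj u t := by
  have hU := (h.inter_eq_sdiff_bad hzp.symm.toWalk (by simp) hzp.ne' hu hpu).2
  exact exists_adj_ne_of_two_le_deg (h.adjw_eq_one_and_deg_eq_two (h.ne_of_adj hu) hU).2.ge x

theorem adjw_eq_one_and_deg_eq_two_of_not_disjoint (h : C.IsIntruder A x z)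
    (hzp : C.graph.Adj z p) (hu : C.graph.Adj x u) (hpu : ¬ Disjoint (A p) (A u)) :
    C.adjw p = 1 ∧ C.deg p = 2 := by
  obtain ⟨t, htx, hut⟩ := h.exists_adj_of_not_disjoint hzp hu hpu
  exact h.adjw_eq_one_and_deg_eq_two hzp.ne'
    (h.card_eq_three_and_sdiff_subset hzp hu hpu hut htx).1

theorem adj_of_adjw_eq_zero (h : C.IsIntruder A x z) (hzp : C.graph.Adj z p)
    (hu : C.graph.Adj x u) (hpu : ¬ Disjoint (A p) (A u)) (hut : C.graph.Adj u t) (htx : t ≠ x)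
    (ht : C.adjw t = 0) (hpq : C.graph.Adj p q) (hqz : q ≠ z) (hq : C.adjw q = 0) :
    C.graph.Adj q t := by
  obtain ⟨hP, hPT⟩ := h.card_eq_three_and_sdiff_subset hzp hu hpu hut htx
  have hQU := h.disjoint_of_adjw_eq_zero hzp hpq hqz hq hu
  have hT := h.isParityEmbedding.card_eq_two h.isLinear (h.two_le_w t) ht
  have hTU := (h.inter_subset_sdiff_bad hu hut htx).2
  have hsdiff : A p \ A u = A t \ A u := by
    have := h.card_inter_of_not_disjoint hzp hu hpu
    have := Finset.card_sdiff_add_card_inter (A p) (A u)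
    have := Finset.card_sdiff_add_card_inter (A t) (A u)
    exact Finset.eq_of_subset_of_card_le
      (Finset.subset_sdiff.2 ⟨hPT, Finset.sdiff_disjoint⟩) (by lia)
  have inter_sdiff : ∀ B, A q ∩ (B \ A u) = A q ∩ B := fun B => by
    rw [← Finset.inter_sdiff_assoc, (hQU.mono_left Finset.inter_subset_left).sdiff_eq_left]
  have hodd : Odd (A q ∩ A t).card := by
    rw [← inter_sdiff, ← hsdiff, inter_sdiff]
    exact h.isParityEmbedding.odd_card_inter hpq.symm
  refine (h.isParityEmbedding.odd_card_inter_iff q t ?_).1 hodd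
  rintro rfl
  exact not_disjoint_of_odd_card_inter (h.isParityEmbedding.odd_card_inter hut.symm) hQU

theorem disjoint_of_adjw_eq_three (h : C.IsIntruder A x z)
    (hwc : C.WorkingConditions) (hz : C.adjw z = 3) (hzp : C.graph.Adj z p) (hu : C.graph.Adj x u) :
    Disjoint (A p) (A u) := by
  by_contra hpu
  have hG := h.isLinear.2
  obtain ⟨hp, hdeg⟩ := h.adjw_eq_one_and_deg_eq_two_of_not_disjoint hzp hu hpu
  obtain ⟨t, htx, hut⟩ := h.exists_adj_of_not_disjoint hzp hu hpu
  obtain ⟨q, hqz, hpq⟩ := exists_adj_ne_of_two_le_deg hdeg.ge z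
  have hu_adjw : C.adjw u = 1 := (h.adjw_eq_one_and_deg_eq_two (h.ne_of_adj hu)
    (h.inter_eq_sdiff_bad hzp.symm.toWalk (by simp) hzp.ne' hu hpu).2).1
  have htz : t ≠ z := (h.ne_and_not_adj (.cons hu hut.toWalk) .nil (by simp)).1
  have htp : t ≠ p := (h.ne_and_not_adj (.cons hu hut.toWalk) hzp.symm.toWalk (by simp)).1
  have huq : u ≠ q := (h.ne_and_not_adj hu.toWalk (.cons hpq.symm hzp.symm.toWalk) (by simp)).1
  have hq := hwc.adjw_eq_zero_of_adj h.isLinear hz hpq hp hqz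
  have ht := hwc.adjw_eq_zero_of_adj h.isLinear hz hut hu_adjw htz
  have hqt := h.adj_of_adjw_eq_zero hzp hu hpu hut htx ht hpq hqz hq
  have hpath : (SimpleGraph.Walk.cons hzp (.cons hpq (.cons hqt hut.symm.toWalk))).IsPath :=
    isPath_cons_cons hG hqz.symm (isPath_cons_cons hG htp.symm
      (isPath_cons_cons hG huq.symm (.of_adj hut.symm)))
  have hpattern := hasPattern_of_isPath hpath
  simp only [SimpleGraph.Walk.support_cons, SimpleGraph.Walk.support_nil, List.map_cons,
    List.map_nil, hz, hp, hq, ht, hu_adjw] at hpattern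
  exact hwc.not_hasPattern (by simp [forbiddenPatterns]) hpattern

theorem adjw_ne_two (h : C.IsIntruder A x z) : C.adjw z ≠ 2 := by
  intro hz
  obtain ⟨u, v, huv, hu, hv, -⟩ := h.isBad
  have hsdiff := h.card_sdiff_union hu hv huv
  have hZ := h.isParityEmbedding.card_eq_adjw_add_deg z
  have hlin := h.isLinear.1 z
  have hcover : A z ⊆ A u ∪ A v := by
    rw [← Finset.sdiff_eq_empty_iff_subset, ← Finset.card_eq_zero]
    lia
  have adjw_pos : ∀ {p}, C.graph.Adj z p → 0 < C.adjw p := fun {p} hzp => by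
    have hmeets : ¬ Disjoint (A p) (A u ∪ A v) := fun hdisj =>
      not_disjoint_of_odd_card_inter (h.isParityEmbedding.odd_card_inter hzp.symm)
        (hdisj.mono_right hcover)
    rw [Finset.disjoint_union_right, not_and_or] at hmeets
    rcases hmeets with hpu | hpv
    · have := h.adjw_eq_one_and_deg_eq_two_of_not_disjoint hzp hu hpu
      lia
    · have := h.adjw_eq_one_and_deg_eq_two_of_not_disjoint hzp hv hpv
      lia
  obtain ⟨p, hzp⟩ := exists_adj_of_deg_pos (v := z) (by lia)
  obtain ⟨q, hqp, hzq⟩ := exists_adj_ne_of_two_le_deg (v := z) (by lia) p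
  exact h.isRemote.not_isBad_of_walk .nil (by simp)
    ⟨q, p, hqp, hzq, hzp, adjw_pos hzq, adjw_pos hzp⟩

theorem deg_eq_two_and_not_disjoint (h : C.IsIntruder A x z)
    (hwc : C.WorkingConditions) (hz : C.adjw z = 3)
    (hzp : C.graph.Adj z p) (hzq : C.graph.Adj z q) :
    C.deg z = 2 ∧ ¬ Disjoint (A p) (A q) := by
  obtain ⟨u, v, huv, hu, hv, -⟩ := h.isBad
  have exists_mem : ∀ {a}, C.graph.Adj z a → ∃ i ∈ A a, i ∈ A z \ (A u ∪ A v) := fun {a} hza => by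
    obtain ⟨i, hia, hiz⟩ := Finset.not_disjoint_iff.1
      (not_disjoint_of_odd_card_inter (h.isParityEmbedding.odd_card_inter hza.symm))
    have hdisj := Finset.disjoint_union_right.2
      ⟨h.disjoint_of_adjw_eq_three hwc hz hza hu, h.disjoint_of_adjw_eq_three hwc hz hza hv⟩
    exact ⟨i, hia, Finset.mem_sdiff.2 ⟨hiz, Finset.disjoint_left.1 hdisj hia⟩⟩
  obtain ⟨i, hip, hi⟩ := exists_mem hzp
  obtain ⟨j, hjq, hj⟩ := exists_mem hzq
  have hpos := Finset.card_pos.2 ⟨i, hi⟩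
  have hsdiff := h.card_sdiff_union hu hv huv
  have hZ := h.isParityEmbedding.card_eq_adjw_add_deg z
  have hdeg := h.isLinear.1 z
  obtain rfl : i = j := Finset.card_le_one.1 (by lia) i hi j hj
  exact ⟨by lia, Finset.not_disjoint_iff.2 ⟨i, hip, hjq⟩⟩

theorem exists_adj_union_eq (h : C.IsIntruder A x z)
    (hwc : C.WorkingConditions) (hz : C.adjw z = 3)
    (hzp : C.graph.Adj z p) (hzq : C.graph.Adj z q) (hpq : p ≠ q) (hp : C.adjw p = 0) :
    ∃ s, s ≠ z ∧ C.graph.Adj p s ∧ A p ∪ A s = A q ∧ (A q).card = 3 := by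
  have hlin := h.isLinear
  have hA := h.isParityEmbedding
  obtain ⟨s, hsz, hps⟩ := exists_adj_ne_of_two_le_deg (deg_eq_two hlin (h.two_le_w p) hp).ge z
  have hs : C.adjw s = 0 := by
    refine le_antisymm (not_lt.1 fun hs_pos => ?_) (adjw_nonneg hlin (h.two_le_w s))
    exact h.isRemote.not_isBad_of_walk hzp.symm.toWalk (by simp)
      ⟨s, z, hsz, hps, hzp.symm, hs_pos, by lia⟩
  have hP := hA.card_eq_two hlin (h.two_le_w p) hp
  have hS := hA.card_eq_two hlin (h.two_le_w s) hs
  have hPQ : A p ⊆ A q := subset_of_even_card_inter hP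
    (hA.even_card_inter (ne_and_not_adj_of_isPath hlin.2 (W := .cons hzp.symm hzq.toWalk)
      (isPath_cons_cons hlin.2 hpq (.of_adj hzq)) (by simp)))
    (h.deg_eq_two_and_not_disjoint hwc hz hzp hzq).2
  have hSP := hA.odd_card_inter hps.symm
  have hSQ : A s ⊆ A q := subset_of_even_card_inter hS
    (hA.even_card_inter (ne_and_not_adj_of_isPath hlin.2
      (W := .cons hps.symm (.cons hzp.symm hzq.toWalk))
      (isPath_cons_cons hlin.2 hsz (isPath_cons_cons hlin.2 hpq (.of_adj hzq))) (by simp)))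
    fun hdisj => not_disjoint_of_odd_card_inter hSP (hdisj.mono_right hPQ)
  have hunion := Finset.card_union_add_card_inter (A s) (A p)
  have hone := card_inter_eq_one_of_odd hSP
    (hS ▸ Finset.card_le_card Finset.inter_subset_left)
  have hQ := h.card_le_three hzq.ne'
  have hsub := Finset.union_subset hPQ hSQ
  rw [Finset.union_comm] at hunion
  have heq := Finset.eq_of_subset_of_card_le hsub (by lia)
  exact ⟨s, hsz, hps, heq, by lia⟩

theorem adjw_pos_of_adjw_eq_three (h : C.IsIntruder A x z)
    (hwc : C.WorkingConditions) (hz : C.adjw z = 3)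
    (hzp : C.graph.Adj z p) (hzq : C.graph.Adj z q) (hpq : p ≠ q) : 0 < C.adjw p := by
  have hlin := h.isLinear
  have hA := h.isParityEmbedding
  refine (adjw_nonneg hlin (h.two_le_w p)).lt_of_ne' fun hp => ?_
  obtain ⟨s, hsz, hps, hQ, hQcard⟩ := h.exists_adj_union_eq hwc hz hzp hzq hpq hp
  obtain ⟨hq, hqdeg⟩ := h.adjw_eq_one_and_deg_eq_two hzq.ne' hQcard
  obtain ⟨y, hyz, hqy⟩ := exists_adj_ne_of_two_le_deg hqdeg.ge z
  have hY := hA.card_eq_two hlin (h.two_le_w y)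
    (hwc.adjw_eq_zero_of_adj hlin hz hqy hq hyz)
  have hYQ := hA.odd_card_inter hqy.symm
  have hYQone := card_inter_eq_one_of_odd hYQ
    (hY ▸ Finset.card_le_card Finset.inter_subset_left)
  have disjoint_of_subset : ∀ {a}, A a ⊆ A q → y ≠ a ∧ ¬ C.graph.Adj y a →
      Disjoint (A y) (A a) := fun {a} haq hya => by
    by_contra hmeets
    have := two_le_card_inter_of_even (hA.even_card_inter hya) hmeets
    have := Finset.card_le_card (Finset.inter_subset_inter_left (s := A y) haq)
    lia
  have hYP : Disjoint (A y) (A p) := disjoint_of_subset (hQ ▸ Finset.subset_union_left)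
    (ne_and_not_adj_of_isPath hlin.2 (W := .cons hqy.symm (.cons hzq.symm hzp.toWalk))
      (isPath_cons_cons hlin.2 hyz (isPath_cons_cons hlin.2 hpq.symm (.of_adj hzp))) (by simp))
  have hYS : Disjoint (A y) (A s) := disjoint_of_subset (hQ ▸ Finset.subset_union_right)
    (ne_and_not_adj_of_isPath hlin.2
      (W := .cons hqy.symm (.cons hzq.symm (.cons hzp hps.toWalk)))
      (isPath_cons_cons hlin.2 hyz (isPath_cons_cons hlin.2 hpq.symm
        (isPath_cons_cons hlin.2 hsz.symm (.of_adj hps))))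
      (by simp))
  exact not_disjoint_of_odd_card_inter hYQ (hQ ▸ Finset.disjoint_union_right.2 ⟨hYP, hYS⟩)

theorem adjw_ne_three (h : C.IsIntruder A x z) (hwc : C.WorkingConditions) : C.adjw z ≠ 3 := by
  intro hz
  obtain ⟨u, v, huv, hu, hv, -⟩ := h.isBad
  have hsdiff := h.card_sdiff_union hu hv huv
  have hZ := h.isParityEmbedding.card_eq_adjw_add_deg z
  obtain ⟨p, hzp⟩ := exists_adj_of_deg_pos (v := z) (by lia)
  have hdeg := (h.deg_eq_two_and_not_disjoint hwc hz hzp hzp).1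
  obtain ⟨q, hqp, hzq⟩ := exists_adj_ne_of_two_le_deg hdeg.ge p
  exact h.isRemote.not_isBad_of_walk .nil (by simp)
    ⟨q, p, hqp, hzq, hzp, h.adjw_pos_of_adjw_eq_three hwc hz hzq hzp hqp,
      h.adjw_pos_of_adjw_eq_three hwc hz hzp hzq hqp.symm⟩

end IsIntruder

theorem not_isIntruder {C : Config} {ι : Type*} [DecidableEq ι] {A : C.V → Finset ι} {x z : C.V}
    (hwc : C.WorkingConditions) : ¬ C.IsIntruder A x z := fun h => by
  have := h.one_lt_adjw
  have := hwc.adjw_le_three z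
  have := h.adjw_ne_two
  have := h.adjw_ne_three hwc
  lia

end Config

/-! ### From embeddings to supports -/

namespace Config

variable {C : Config} {N : ℕ} {φ : C.V → Fin N → ℤ}

namespace IsEmbedding

theorem dot_self (hφ : C.IsEmbedding N φ) (v : C.V) : dot (φ v) (φ v) = C.w v := by
  rw [hφ, if_pos rfl]

theorem supp_inter_nonempty_of_adj (hφ : C.IsEmbedding N φ) {u v : C.V}
    (huv : C.graph.Adj u v) : (supp (φ u) ∩ supp (φ v)).Nonempty :=
  supp_inter_nonempty_of_dot_ne_zero (by simp [hφ u v, huv.ne, huv])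

theorem card_supp_pos (hφ : C.IsEmbedding N φ) {v : C.V} (hv : C.w v ≠ 0) :
    0 < (supp (φ v)).card := by
  rw [← hφ.dot_self] at hv
  simpa using supp_inter_nonempty_of_dot_ne_zero hv

theorem card_supp_inter_ne_one (hφ : C.IsEmbedding N φ) {u v : C.V}
    (huv : u ≠ v ∧ ¬ C.graph.Adj u v) : (supp (φ u) ∩ supp (φ v)).card ≠ 1 :=
  card_supp_inter_ne_one_of_dot_eq_zero (by rw [hφ, if_neg huv.1, if_neg huv.2])

theorem card_supp_eq_w (hφ : C.IsEmbedding N φ) {v : C.V}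
    (hv : C.w v < (supp (φ v)).card + 3) : ((supp (φ v)).card : ℤ) = C.w v := by
  rw [← hφ.dot_self] at hv ⊢
  exact card_supp_eq_dot_self (abs_le_one_of_dot_self_lt hv)

theorem isParityEmbedding_supp (hφ : C.IsEmbedding N φ)
    (hw : ∀ v, C.w v < (supp (φ v)).card + 3) : C.IsParityEmbedding fun v => supp (φ v) where
  card_eq_w v := hφ.card_supp_eq_w (hw v)
  odd_card_inter_iff u v huv := by
    have habs : ∀ v i, |φ v i| ≤ 1 := fun v => abs_le_one_of_dot_self_lt (hφ.dot_self v ▸ hw v)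
    rw [odd_card_supp_inter_iff (habs u) (habs v), hφ, if_neg huv]
    split_ifs with hadj <;> simp [hadj]

theorem one_lt_adjw_and_isParityEmbedding (hlin : C.IsLinear) (hwc : C.WorkingConditions)
    (hφ : C.IsEmbedding N φ) {z : C.V} (hz : 4 ≤ (supp (φ z)).card) :
    1 < C.adjw z ∧ C.IsParityEmbedding fun v => supp (φ v) := by
  have w_eq : ∀ v, C.w v = C.adjw v + C.deg v := fun v => by rw [adjw, sub_add_cancel]
  have hdeg := hlin.1 z
  have hz_adjw : 1 < C.adjw z := by
    have := hwc.adjw_le_three z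
    have := hφ.card_supp_eq_w (v := z) (by rw [w_eq]; lia)
    have := w_eq z
    lia
  refine ⟨hz_adjw, hφ.isParityEmbedding_supp fun v => ?_⟩
  rw [w_eq]
  rcases eq_or_ne v z with rfl | hvz
  · have := hwc.adjw_le_three v
    lia
  · have := hwc.adjw_le_one hz_adjw hvz
    have := hlin.1 v
    have := hwc.two_le_w v
    have := hφ.card_supp_pos (v := v) (by lia)
    lia

end IsEmbedding

/-- The restriction of `φ` to `S` is standard, or semi-standard at a bad vertex other than `x`. -/
def IsStandardAwayFrom (C : Config) (N : ℕ) (φ : C.V → Fin N → ℤ) (x : C.V) (S : Set C.V) : Prop :=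
  C.IsStandardOn N φ S ∨ ∃ y : C.V, C.IsBad y ∧ y ≠ x ∧ C.IsSemiStandardAtOn N φ y S

namespace IsStandardAwayFrom

variable {S : Set C.V} {x : C.V}

theorem disjoint_supp (hstd : C.IsStandardAwayFrom N φ x S) {a b : C.V} (ha : a ∈ S) (hb : b ∈ S)
    (hab : a ≠ b ∧ ¬ C.graph.Adj a b)
    (hcommon : ∀ y, C.IsBad y → y ≠ x → C.graph.Adj y a → ¬ C.graph.Adj y b) :
    Disjoint (supp (φ a)) (supp (φ b)) := by
  rw [Finset.disjoint_iff_inter_eq_empty, ← Finset.card_eq_zero]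
  rcases hstd with hstd | ⟨y, hy, hyx, hsemi, -⟩
  · simpa [hab.1, hab.2] using hstd a ha b hb
  · simpa [hab.1, hab.2, not_and.2 (hcommon y hy hyx)] using hsemi a ha b hb

theorem disjoint_supp_bad (hstd : C.IsStandardAwayFrom N φ x S) (hlin : C.IsLinear)
    (hwx : C.adjw x = 0) {a : C.V} (ha : a ∈ S) (hx : x ∈ S) (hax : a ≠ x ∧ ¬ C.graph.Adj a x) :
    Disjoint (supp (φ a)) (supp (φ x)) :=
  hstd.disjoint_supp ha hx hax fun _ hy _ _ hyx => (hy.adjw_pos hlin hyx).ne' hwx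

theorem disjoint_supp_of_adj (hstd : C.IsStandardAwayFrom N φ x S) (hlin : C.IsLinear)
    {u v : C.V} (hu : u ∈ S) (hv : v ∈ S) (hxu : C.graph.Adj x u) (hxv : C.graph.Adj x v)
    (huv : u ≠ v) : Disjoint (supp (φ u)) (supp (φ v)) := by
  have hpath : (SimpleGraph.Walk.cons hxu.symm hxv.toWalk).IsPath :=
    isPath_cons_cons hlin.2 huv (.of_adj hxv)
  refine hstd.disjoint_supp hu hv (ne_and_not_adj_of_isPath hlin.2 hpath (by simp))
    fun y _ hyx hyu => ?_
  exact (ne_and_not_adj_of_isPath hlin.2 (W := .cons hyu (.cons hxu.symm hxv.toWalk))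
    (isPath_cons_cons hlin.2 hyx hpath) (by simp)).2

end IsStandardAwayFrom

theorem IsEmbedding.four_le_card_supp (hφ : C.IsEmbedding N φ) (hlin : C.IsLinear)
    (hwc : C.WorkingConditions) {x z : C.V} (hx : C.IsBad x) (hwx : C.adjw x = 0)
    (hdisj : ∀ {u v}, C.graph.Adj x u → C.graph.Adj x v → u ≠ v →
      Disjoint (supp (φ u)) (supp (φ v)))
    (hz : C.IsRemote z) (hmeets : (supp (φ z) ∩ supp (φ x)).Nonempty) :
    4 ≤ (supp (φ z)).card := by
  have hX : (supp (φ x)).card = 2 := by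
    have := deg_eq_two hlin (hwc.two_le_w x) hwx
    rw [adjw] at hwx
    have := hφ.card_supp_eq_w (v := x) (by lia)
    lia
  have ne_one : ∀ {a} (W : C.graph.Walk x a), W.length ≤ 3 →
      (supp (φ z) ∩ supp (φ a)).card ≠ 1 := fun W hW => by
    rw [Finset.inter_comm]
    exact hφ.card_supp_inter_ne_one (hz.ne_and_not_adj hx W .nil (by simpa))
  obtain ⟨u, v, huv, hu, hv, -⟩ := hx
  exact (subset_and_four_le_card hX (hφ.supp_inter_nonempty_of_adj hu)
    (hφ.supp_inter_nonempty_of_adj hv) (hdisj hu hv huv) hmeets (ne_one .nil (by simp))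
    (ne_one hu.toWalk (by simp)) (ne_one hv.toWalk (by simp))).2

end Config

theorem statement6_general (C : Config) (hlin : C.IsLinear) (hwc : C.WorkingConditions)
    (N : ℕ) (φ : C.V → Fin N → ℤ) (hφ : C.IsEmbedding N φ) (S : Set C.V)
    (hS : ∀ y b : C.V, C.IsBad y → ∀ W : C.graph.Walk y b, W.length ≤ 4 → b ∈ S)
    (x : C.V) (hx : C.IsBad x) (hwx : C.adjw x = 0) (hstd : C.IsStandardAwayFrom N φ x S)
    (v : C.V) (hvx : v ≠ x) (hsupp : (supp (φ v) ∩ supp (φ x)).Nonempty) :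
    C.graph.Adj v x := by
  by_contra hnadj
  have hxS : x ∈ S := hS x x hx .nil (by simp)
  have hmeets := Finset.not_disjoint_iff_nonempty_inter.2 hsupp
  have hvS : v ∉ S := fun hv => hmeets (hstd.disjoint_supp_bad hlin hwx hv hxS ⟨hvx, hnadj⟩)
  have hremote : C.IsRemote v := fun y hy W => by
    by_contra! hW
    exact hvS (hS y v hy W (by lia))
  have hdisj : ∀ {a b}, C.graph.Adj x a → C.graph.Adj x b → a ≠ b →
      Disjoint (supp (φ a)) (supp (φ b)) := fun {a b} ha hb =>
    hstd.disjoint_supp_of_adj hlin (hS x a hx ha.toWalk (by simp)) (hS x b hx hb.toWalk (by simp))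
      ha hb
  have hdisj' : ∀ {a t}, C.graph.Adj x a → C.graph.Adj a t → t ≠ x →
      Disjoint (supp (φ t)) (supp (φ x)) := fun {a t} ha hat htx =>
    hstd.disjoint_supp_bad hlin hwx (hS x t hx (.cons ha hat.toWalk) (by simp)) hxS
      (ne_and_not_adj_of_isPath hlin.2 (W := .cons hat.symm ha.symm.toWalk)
        (isPath_cons_cons hlin.2 htx (.of_adj ha.symm)) (by simp))
  obtain ⟨hadjw, hparity⟩ := hφ.one_lt_adjw_and_isParityEmbedding hlin hwc
    (hφ.four_le_card_supp hlin hwc hx hwx hdisj hremote hsupp)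
  exact Config.not_isIntruder hwc (A := fun a => supp (φ a))
    ⟨hlin, hwc.two_le_w, hparity, hx, hwx, hremote, hadjw, hwc.adjw_le_one hadjw, hmeets, hdisj,
      hdisj'⟩

/-- Lemma 5.5: the case of a bad vertex of adjusted weight `0`. -/
theorem statement6 (C : Config) (hlin : C.IsLinear) (hwc : C.WorkingConditions)
    (hbad : ∃ y : C.V, C.IsBad y) (N : ℕ) (φ : C.V → Fin N → ℤ)
    (hφ : C.IsEmbedding N φ) (m : ℕ) (vc : ℕ → C.V) (hebp : C.IsExtBadPart m vc)
    (x : C.V) (hx : C.IsBad x) (hwx : C.adjw x = 0)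
    (hstd : C.IsStandardOn N φ (C.ebpSet m vc) ∨
      ∃ y : C.V, C.IsBad y ∧ y ≠ x ∧ C.IsSemiStandardAtOn N φ y (C.ebpSet m vc))
    (v : C.V) (hvx : v ≠ x) (hsupp : (supp (φ v) ∩ supp (φ x)).Nonempty) :
    C.graph.Adj v x :=
  statement6_general C hlin hwc N φ hφ (C.ebpSet m vc)
    (fun _ _ hy W hW => hebp.1.mem_ebpSet_of_walk hlin hwc hy W hW) x hx hwx hstd v hvx hsupp

end LensPaper
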